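/- Let (ρₙ)ₙ be a sequence of real random variables (possibly on different probability spaces), each satisfying the log-Metropolis–Hastings-ratio symmetry, with E[ρₙ²] < ∞ for all n and E[ρₙ²] → 0 as n → ∞. Suppose there exist positive constants κₙ → 0 such that E[ρₙ² · 1{ρₙ < −κₙ}] = o(E[ρₙ²]) as n → ∞. Then |E[ρₙ] + (1/2)·E[ρₙ²]| ≤ sinh(κₙ/2)·E[ρₙ²] + E[ρₙ² · 1{ρₙ < −κₙ}] = o(E[ρₙ²]), and moreover E[ρₙ] + (1/2)·Var(ρₙ) = o(E[ρₙ²]) as n → ∞. -/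

import Mathlib

open MeasureTheory Filter

/-- A real random variable `ρ` on a probability space satisfies the
log-Metropolis–Hastings-ratio symmetry if for every measurable `f : ℝ → ℝ` with
`E[|f(ρ)|] < ∞` one has `E[f(-ρ) e^ρ] = E[f(ρ)]`. -/
def LMHRSymmetric {Ω : Type*} [MeasurableSpace Ω] (P : Measure Ω) (ρ : Ω → ℝ) : Prop :=
  ∀ f : ℝ → ℝ, Measurable f → Integrable (fun ω => f (ρ ω)) P →
    ∫ ω, f (-ρ ω) * Real.exp (ρ ω) ∂P = ∫ ω, f (ρ ω) ∂P

theorem sinh_le_mul_cosh_aux (t : ℝ) (ht : 0 ≤ t) : Real.sinh t ≤ t * Real.cosh t := by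
  have hd : ∀ x : ℝ, HasDerivAt (fun x => x * Real.cosh x - Real.sinh x)
      (1 * Real.cosh x + x * Real.sinh x - Real.cosh x) x := fun x =>
    ((hasDerivAt_id x).mul (Real.hasDerivAt_cosh x)).sub (Real.hasDerivAt_sinh x)
  have hm : MonotoneOn (fun x => x * Real.cosh x - Real.sinh x) (Set.Ici 0) := by
    apply monotoneOn_of_deriv_nonneg (convex_Ici 0)
    · fun_prop
    · exact fun x _ => (hd x).differentiableAt.differentiableWithinAt
    · intro x hx
      rw [interior_Ici] at hx
      rw [(hd x).deriv]
      have := mul_nonneg (le_of_lt hx) (Real.sinh_nonneg_iff.2 (le_of_lt hx))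
      linarith
  have := hm (Set.mem_Ici.2 le_rfl) (Set.mem_Ici.2 ht) ht
  simp at this
  linarith

theorem exp_aux (t : ℝ) : Real.exp (-(2 * t)) + 1 = 2 * Real.exp (-t) * Real.cosh t
    ∧ 1 - Real.exp (-(2 * t)) = 2 * Real.exp (-t) * Real.sinh t := by
  have h1 : Real.exp (-(2 * t)) = Real.exp (-t) * Real.exp (-t) := by
    rw [← Real.exp_add]; ring_nf
  have h2 : Real.exp (-t) * Real.exp t = 1 := by
    rw [← Real.exp_add]; simp
  rw [Real.cosh_eq, Real.sinh_eq, h1]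
  constructor <;> linarith

/-- The folded integrand for `E[ρ] + E[ρ²]/2`. -/
noncomputable def HH (y : ℝ) : ℝ :=
  if y < 0 then (y + 1 / 2 * y ^ 2) + (-y + 1 / 2 * y ^ 2) * Real.exp y else 0

/-- The folded integrand for `E[ρ²]`. -/
noncomputable def GG (y : ℝ) : ℝ :=
  if y < 0 then y ^ 2 + y ^ 2 * Real.exp y else 0

theorem HH_nonneg (y : ℝ) : 0 ≤ HH y := by
  unfold HH
  split_ifs with h
  · obtain ⟨t, rfl⟩ : ∃ t, y = -(2 * t) := ⟨-y / 2, by ring⟩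
    obtain ⟨h1, h2⟩ := exp_aux t
    have ht : 0 < t := by linarith
    have h3 := sinh_le_mul_cosh_aux t ht.le
    have h4 : (-(2 * t) + 1 / 2 * (-(2 * t)) ^ 2) +
        (- -(2 * t) + 1 / 2 * (-(2 * t)) ^ 2) * Real.exp (-(2 * t))
        = 4 * t * Real.exp (-t) * (t * Real.cosh t - Real.sinh t) := by
      linear_combination (2 * t ^ 2) * h1 - 2 * t * h2
    rw [h4]
    have := sub_nonneg.2 h3
    positivity
  · exact le_rfl

theorem HH_le (y κ : ℝ) (hκ : 0 < κ) :
    HH y ≤ Real.sinh (κ / 2) * GG y + (if y < -κ then y ^ 2 else 0) := by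
  have hs : 0 ≤ Real.sinh (κ / 2) := Real.sinh_nonneg_iff.2 (by linarith)
  unfold HH GG
  by_cases h : y < 0
  swap
  · have : ¬ y < -κ := by linarith
    simp [h, this]
  simp only [h, if_true]
  have he := Real.exp_pos y
  split_ifs with hk
  · have he1 : Real.exp y ≤ 1 := Real.exp_le_one_iff.2 h.le
    have h1 : 0 ≤ Real.sinh (κ / 2) * (y ^ 2 + y ^ 2 * Real.exp y) := by positivity
    have h2 : 0 ≤ (-y) * (1 - Real.exp y) := mul_nonneg (by linarith) (by linarith)
    have h3 : 0 ≤ y ^ 2 * (1 - Real.exp y) := mul_nonneg (by positivity) (by linarith)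
    nlinarith
  · obtain ⟨t, rfl⟩ : ∃ t, y = -(2 * t) := ⟨-y / 2, by ring⟩
    obtain ⟨h1, h2⟩ := exp_aux t
    have ht : 0 < t := by linarith
    have h4 : (-(2 * t) + 1 / 2 * (-(2 * t)) ^ 2) +
        (- -(2 * t) + 1 / 2 * (-(2 * t)) ^ 2) * Real.exp (-(2 * t))
        = 4 * t * Real.exp (-t) * (t * Real.cosh t - Real.sinh t) := by
      linear_combination (2 * t ^ 2) * h1 - 2 * t * h2
    have h5 : Real.sinh (κ / 2) * ((-(2 * t)) ^ 2 + (-(2 * t)) ^ 2 * Real.exp (-(2 * t)))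
        = 4 * t * Real.exp (-t) * (2 * t * (Real.sinh (κ / 2) * Real.cosh t)) := by
      linear_combination (4 * t ^ 2 * Real.sinh (κ / 2)) * h1
    rw [h4, h5, add_zero]
    apply mul_le_mul_of_nonneg_left _ (by positivity)
    have h6 : t ≤ Real.sinh t := Real.self_le_sinh_iff.2 ht.le
    have h7 : Real.sinh t ≤ Real.sinh (κ / 2) := Real.sinh_le_sinh.2 (by linarith)
    have h8 : Real.cosh t - Real.sinh t ≤ 1 := by
      rw [Real.cosh_sub_sinh]; exact Real.exp_le_one_iff.2 (by linarith)
    have h9 : Real.sinh (κ / 2) ≤ Real.sinh (κ / 2) * Real.cosh t :=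
      le_mul_of_one_le_right hs (Real.one_le_cosh t)
    have h10 : 0 ≤ t * (2 * (Real.sinh (κ / 2) * Real.cosh t) - (Real.cosh t - 1)) :=
      mul_nonneg ht.le (by linarith)
    nlinarith

theorem fold_aux {Ω : Type*} [MeasurableSpace Ω] (P : Measure Ω) (ρ : Ω → ℝ)
    (hmeas : Measurable ρ) (hsymm : LMHRSymmetric P ρ) (f : ℝ → ℝ) (hf : Measurable f)
    (hf0 : f 0 = 0)
    (hi : Integrable (fun ω => f (ρ ω)) P)
    (hi2 : Integrable (fun ω => f (-ρ ω)) P) :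
    Integrable (fun ω => if ρ ω < 0 then f (ρ ω) + f (-ρ ω) * Real.exp (ρ ω) else 0) P ∧
    ∫ ω, f (ρ ω) ∂P
      = ∫ ω, (if ρ ω < 0 then f (ρ ω) + f (-ρ ω) * Real.exp (ρ ω) else 0) ∂P := by
  have hp : Measurable (fun y : ℝ => if 0 < y then f y else 0) :=
    Measurable.ite measurableSet_Ioi hf measurable_const
  have hn : Measurable (fun y : ℝ => if y < 0 then f y else 0) :=
    Measurable.ite measurableSet_Iio hf measurable_const
  have ip : Integrable (fun ω => if 0 < ρ ω then f (ρ ω) else 0) P := by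
    refine hi.mono (hp.comp hmeas).aestronglyMeasurable (Eventually.of_forall fun ω => ?_)
    split_ifs <;> simp
  have im : Integrable (fun ω => if ρ ω < 0 then f (ρ ω) else 0) P := by
    refine hi.mono (hn.comp hmeas).aestronglyMeasurable (Eventually.of_forall fun ω => ?_)
    split_ifs <;> simp
  have ie : Integrable
      (fun ω => (if 0 < -ρ ω then f (-ρ ω) else 0) * Real.exp (ρ ω)) P := by
    refine hi2.mono (((hp.comp hmeas.neg).mul (Real.measurable_exp.comp hmeas)).aestronglyMeasurable)
      (Eventually.of_forall fun ω => ?_)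
    split_ifs with h
    · rw [norm_mul]
      apply mul_le_of_le_one_right (norm_nonneg _)
      rw [Real.norm_eq_abs, Real.abs_exp]
      exact Real.exp_le_one_iff.2 (by linarith)
    · simp
  have key := hsymm _ hp ip
  have e1 : (fun ω => if ρ ω < 0 then f (ρ ω) + f (-ρ ω) * Real.exp (ρ ω) else 0)
      = fun ω => (if ρ ω < 0 then f (ρ ω) else 0) +
        (if 0 < -ρ ω then f (-ρ ω) else 0) * Real.exp (ρ ω) := by
    funext ω
    by_cases h : ρ ω < 0 <;> simp [h]
  have e2 : (fun ω => f (ρ ω))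
      = fun ω => (if ρ ω < 0 then f (ρ ω) else 0) + (if 0 < ρ ω then f (ρ ω) else 0) := by
    funext ω
    rcases lt_trichotomy (ρ ω) 0 with h | h | h
    · simp [h, h.not_gt]
    · simp [h, hf0]
    · simp [h, h.not_gt]
  rw [e1]
  refine ⟨im.add ie, ?_⟩
  rw [e2, integral_add im ip, integral_add im ie, key]

theorem bound_aux {Ω : Type*} [MeasurableSpace Ω] (P : Measure Ω) [IsProbabilityMeasure P]
    (ρ : Ω → ℝ) (hmeas : Measurable ρ) (hsymm : LMHRSymmetric P ρ)
    (h2 : Integrable (fun ω => (ρ ω) ^ 2) P) (κ : ℝ) (hκ : 0 < κ) :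
    |(∫ ω, ρ ω ∂P) + (1 / 2) * ∫ ω, (ρ ω) ^ 2 ∂P|
        ≤ Real.sinh (κ / 2) * (∫ ω, (ρ ω) ^ 2 ∂P)
          + ∫ ω in {ω | ρ ω < -κ}, (ρ ω) ^ 2 ∂P := by
  have h1 : Integrable ρ P :=
    ((memLp_two_iff_integrable_sq hmeas.aestronglyMeasurable).2 h2).integrable one_le_two
  obtain ⟨iG, eG⟩ := fold_aux P ρ hmeas hsymm (fun y => y ^ 2) (by fun_prop) (by simp) h2
    (by simpa using h2)
  obtain ⟨iH, eH⟩ := fold_aux P ρ hmeas hsymm (fun y => y + 1 / 2 * y ^ 2) (by fun_prop)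
    (by simp) (h1.add (h2.const_mul _))
    (by
      have := h1.neg.add (h2.const_mul (1 / 2))
      refine this.congr (Eventually.of_forall fun ω => ?_)
      simp)
  have e1 : (∫ ω, ρ ω ∂P) + (1 / 2) * ∫ ω, (ρ ω) ^ 2 ∂P = ∫ ω, HH (ρ ω) ∂P := by
    rw [← integral_const_mul, ← integral_add h1 (h2.const_mul _)]
    simpa [HH] using eH
  have iH2 : Integrable (fun ω => HH (ρ ω)) P := by simpa [HH] using iH
  have iG2 : Integrable (fun ω => GG (ρ ω)) P := by simpa [GG] using iG
  have e2 : ∫ ω, (ρ ω) ^ 2 ∂P = ∫ ω, GG (ρ ω) ∂P := by simpa [GG] using eG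
  have hS : MeasurableSet {ω | ρ ω < -κ} := measurableSet_lt hmeas measurable_const
  have e3 : ∫ ω in {ω | ρ ω < -κ}, (ρ ω) ^ 2 ∂P
      = ∫ ω, (if ρ ω < -κ then ρ ω ^ 2 else 0) ∂P := by
    rw [← integral_indicator hS]
    rfl
  have iS : Integrable (fun ω => if ρ ω < -κ then ρ ω ^ 2 else 0) P := h2.indicator hS
  rw [e1, e3, e2, abs_of_nonneg (integral_nonneg fun ω => HH_nonneg _), ← integral_const_mul,
    ← integral_add (iG2.const_mul _) iS]
  exact integral_mono iH2 ((iG2.const_mul _).add iS) fun ω => HH_le _ _ hκ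

/-- "Half variance plus mean is asymptotically negligible": for a sequence `ρₙ` of random
variables (possibly on different probability spaces), each satisfying the
log-Metropolis–Hastings-ratio symmetry, with `E[ρₙ²] → 0` and positive `κₙ → 0` such that
`E[ρₙ² 1{ρₙ < -κₙ}] = o(E[ρₙ²])`, one has
`|E[ρₙ] + (1/2) E[ρₙ²]| ≤ sinh(κₙ/2) E[ρₙ²] + E[ρₙ² 1{ρₙ < -κₙ}] = o(E[ρₙ²])`, and
`E[ρₙ] + (1/2) Var(ρₙ) = o(E[ρₙ²])`. -/
theorem stmt5 {Ω : ℕ → Type*} [∀ n, MeasurableSpace (Ω n)]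
    (P : ∀ n, Measure (Ω n)) [∀ n, IsProbabilityMeasure (P n)]
    (ρ : ∀ n, Ω n → ℝ) (hmeas : ∀ n, Measurable (ρ n))
    (hsymm : ∀ n, LMHRSymmetric (P n) (ρ n))
    (h2 : ∀ n, Integrable (fun ω => (ρ n ω) ^ 2) (P n))
    (h2to0 : Tendsto (fun n => ∫ ω, (ρ n ω) ^ 2 ∂P n) atTop (nhds 0))
    (κ : ℕ → ℝ) (hκpos : ∀ n, 0 < κ n) (hκ0 : Tendsto κ atTop (nhds 0))
    (hneg : Tendsto
      (fun n => (∫ ω in {ω | ρ n ω < -κ n}, (ρ n ω) ^ 2 ∂P n) / ∫ ω, (ρ n ω) ^ 2 ∂P n)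
      atTop (nhds 0)) :
    (∀ n, |(∫ ω, ρ n ω ∂P n) + (1 / 2) * ∫ ω, (ρ n ω) ^ 2 ∂P n|
        ≤ Real.sinh (κ n / 2) * (∫ ω, (ρ n ω) ^ 2 ∂P n)
          + ∫ ω in {ω | ρ n ω < -κ n}, (ρ n ω) ^ 2 ∂P n)
    ∧ Tendsto
        (fun n => (Real.sinh (κ n / 2) * (∫ ω, (ρ n ω) ^ 2 ∂P n)
          + ∫ ω in {ω | ρ n ω < -κ n}, (ρ n ω) ^ 2 ∂P n) / ∫ ω, (ρ n ω) ^ 2 ∂P n)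
        atTop (nhds 0)
    ∧ Tendsto
        (fun n => ((∫ ω, ρ n ω ∂P n) + (1 / 2) * ProbabilityTheory.variance (ρ n) (P n))
          / ∫ ω, (ρ n ω) ^ 2 ∂P n)
        atTop (nhds 0) := by
  have B : ∀ n, |(∫ ω, ρ n ω ∂P n) + (1 / 2) * ∫ ω, (ρ n ω) ^ 2 ∂P n|
        ≤ Real.sinh (κ n / 2) * (∫ ω, (ρ n ω) ^ 2 ∂P n)
          + ∫ ω in {ω | ρ n ω < -κ n}, (ρ n ω) ^ 2 ∂P n := fun n =>
    bound_aux (P n) (ρ n) (hmeas n) (hsymm n) (h2 n) (κ n) (hκpos n)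
  have hm0 : ∀ n, 0 ≤ ∫ ω, (ρ n ω) ^ 2 ∂P n := fun n => integral_nonneg fun ω => sq_nonneg _
  have T2 : Tendsto
        (fun n => (Real.sinh (κ n / 2) * (∫ ω, (ρ n ω) ^ 2 ∂P n)
          + ∫ ω in {ω | ρ n ω < -κ n}, (ρ n ω) ^ 2 ∂P n) / ∫ ω, (ρ n ω) ^ 2 ∂P n)
        atTop (nhds 0) := by
    have hs : Tendsto (fun n => Real.sinh (κ n / 2)) atTop (nhds 0) := by
      have := (Real.continuous_sinh.tendsto 0).comp
        (show Tendsto (fun n => κ n / 2) atTop (nhds 0) by simpa using hκ0.div_const 2)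
      simpa [Function.comp_def] using this
    have hu := hs.add hneg
    rw [add_zero] at hu
    refine squeeze_zero (fun n => ?_) (fun n => ?_) hu
    · exact div_nonneg ((abs_nonneg _).trans (B n)) (hm0 n)
    · rw [add_div, mul_div_assoc]
      gcongr
      exact mul_le_of_le_one_right (Real.sinh_nonneg_iff.2 (by linarith [hκpos n]))
        (div_self_le_one _)
  refine ⟨B, T2, ?_⟩
  have T3 : Tendsto (fun n => ((∫ ω, ρ n ω ∂P n) + (1 / 2) * ∫ ω, (ρ n ω) ^ 2 ∂P n)
      / ∫ ω, (ρ n ω) ^ 2 ∂P n) atTop (nhds 0) := by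
    refine squeeze_zero_norm (fun n => ?_) T2
    rw [norm_div, Real.norm_eq_abs, Real.norm_eq_abs, abs_of_nonneg (hm0 n)]
    exact div_le_div_of_nonneg_right (B n) (hm0 n)
  have T4 := T3.sub ((((T3.sub_const (1 / 2)).pow 2).mul h2to0).const_mul (1 / 2))
  rw [mul_zero, mul_zero, sub_zero] at T4
  refine T4.congr fun n => ?_
  rw [ProbabilityTheory.variance_eq_sub
    ((memLp_two_iff_integrable_sq (hmeas n).aestronglyMeasurable).2 (h2 n))]
  simp only [Pi.pow_apply]
  generalize (∫ ω, (ρ n ω) ^ 2 ∂P n) = m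
  generalize (∫ ω, ρ n ω ∂P n) = a
  by_cases hm : m = 0
  · simp [hm]
  · field_simp
    ring
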